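/- Let S(X,Y,Z) = X²u(Y,Z) + Xv(Y,Z) + w(Y,Z) be a cubic form over 𝔽_q (so u is linear, v quadratic, w cubic) with v(Y,0) not identically zero and w(0,Z) not identically zero. If S is not absolutely irreducible, then S has a linear factor defined over 𝔽_q that is not a scalar multiple of Z, and consequently S has a zero (X,Y,Z) ∈ 𝔽_q³ with Z ≠ 0. -/

import Mathlib

/-!
If the cubic `S` is reducible over `F`, one of its factors is linear. If `S` is irreducible over
`F`, let `L` be a linear factor over an extension `K`. An `F`-linear functional `K → F`, applied to
coefficients, shows that polynomials coprime over `F` stay coprime over `K`, so `L` divides no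
nonzero form over `F` of degree less than three. If `X` does not occur in `L`, then `L` divides `v`,
which is impossible. Otherwise `L` is `X - m` up to a scalar, where `u m² + v m + w = 0`. If
`u ∣ v`, then `u` divides `w` and `S`. If not, `m` is determined by `u`, `v`, `w` modulo `u` and
then modulo `u²`, so it is defined over `F`. Finally `Z ∤ S` because `v(Y, 0) ≢ 0`, and a linear
form that is not a multiple of `Z` has a zero with `Z ≠ 0`.
-/

open MvPolynomial

section LinearForms

variable {σ R : Type*} [CommSemiring R]

lemma exists_eq_sum_C_mul_X_of_isHomogeneous_one [Fintype σ] {L : MvPolynomial σ R}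
    (hL : L.IsHomogeneous 1) : ∃ a : σ → R, L = ∑ i, C (a i) * X i := by
  rw [← mem_homogeneousSubmodule, homogeneousSubmodule_one_eq_span_X,
    Submodule.mem_span_range_iff_exists_fun] at hL
  obtain ⟨a, rfl⟩ := hL
  exact ⟨a, by simp only [smul_eq_C_mul]⟩

lemma not_isUnit_of_isHomogeneous [Nontrivial R] {p : MvPolynomial σ R} {n : ℕ}
    (hp : p.IsHomogeneous n) (hn : n ≠ 0) : ¬ IsUnit p := by
  intro hunit
  have hcoeff : constantCoeff p = 0 := hp.coeff_eq_zero (by simpa using hn.symm)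
  exact not_isUnit_zero (hcoeff ▸ hunit.map constantCoeff)

variable {F : Type*} [Field F]

lemma isUnit_of_totalDegree_eq_zero {p : MvPolynomial σ F} (hp0 : p ≠ 0)
    (hdeg : p.totalDegree = 0) : IsUnit p := by
  rw [totalDegree_eq_zero_iff_eq_C] at hdeg
  rw [hdeg] at hp0 ⊢
  exact (isUnit_iff_ne_zero.mpr fun h => hp0 (by rw [h, C_0])).map C

lemma irreducible_of_isHomogeneous_one {L : MvPolynomial σ F} (hL : L.IsHomogeneous 1)
    (hL0 : L ≠ 0) : Irreducible L := by
  refine irreducible_of_totalDegree_eq_one (hL.totalDegree hL0) fun c hc => ?_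
  obtain ⟨d, hd⟩ := exists_coeff_ne_zero hL0
  exact isUnit_iff_ne_zero.mpr fun hc0 => hd (zero_dvd_iff.mp (hc0 ▸ hc d))

lemma exists_eval_eq_zero_of_ne_C_mul_X [Finite σ] {L : MvPolynomial σ F}
    (hL : L.IsHomogeneous 1) (i : σ) (hne : ∀ c : F, L ≠ C c * X i) :
    ∃ x : σ → F, eval x L = 0 ∧ x i ≠ 0 := by
  classical
  have := Fintype.ofFinite σ
  obtain ⟨a, rfl⟩ := exists_eq_sum_C_mul_X_of_isHomogeneous_one hL
  obtain ⟨j, hji, haj⟩ : ∃ j, j ≠ i ∧ a j ≠ 0 := by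
    by_contra! h
    exact hne (a i) (Finset.sum_eq_single i (fun j _ hj => by simp [h j hj]) (by simp))
  refine ⟨Pi.single i 1 + Pi.single j (-a i / a j), ?_, by simp [hji.symm]⟩
  simp [mul_add, Finset.sum_add_distrib, Pi.single_apply, mul_div_cancel₀ _ haj]

lemma eq_rename_or_associated_X_zero_sub_rename {n : ℕ} {L : MvPolynomial (Fin (n + 1)) F}
    (hL : L.IsHomogeneous 1) :
    (∃ l : MvPolynomial (Fin n) F, L = rename Fin.succ l) ∨
      ∃ m : MvPolynomial (Fin n) F, m.IsHomogeneous 1 ∧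
        Associated L (X 0 - rename Fin.succ m) := by
  obtain ⟨a, rfl⟩ := exists_eq_sum_C_mul_X_of_isHomogeneous_one hL
  rw [Fin.sum_univ_succ]
  set l : MvPolynomial (Fin n) F := ∑ i, C (a i.succ) * X i with hl
  have hl1 : l.IsHomogeneous 1 := IsHomogeneous.sum _ _ _ fun i _ => isHomogeneous_C_mul_X _ _
  have hrename : ∑ i : Fin n, C (a i.succ) * X i.succ = rename Fin.succ l := by simp [hl]
  rw [hrename]
  by_cases ha : a 0 = 0
  · exact .inl ⟨l, by simp [ha]⟩
  · refine .inr ⟨C (-(a 0)⁻¹) * l, hl1.C_mul _, ?_⟩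
    have hinv : (C (a 0) * C (a 0)⁻¹ : MvPolynomial (Fin (n + 1)) F) = 1 := by
      rw [← C_mul, mul_inv_cancel₀ ha, C_1]
    refine (associated_unit_mul_right _ _ ((isUnit_iff_ne_zero.mpr (inv_ne_zero ha)).map C)).trans
      (.of_eq ?_)
    simp only [map_mul, rename_C, map_neg]
    linear_combination X 0 * hinv

end LinearForms

section ReducibleCubics

lemma homogeneousComponent_add_mul {σ R : Type*} [CommSemiring R] {p q : MvPolynomial σ R}
    {m n : ℕ} (hp : p.totalDegree ≤ m) (hq : q.totalDegree ≤ n) :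
    homogeneousComponent (m + n) (p * q) =
      homogeneousComponent m p * homogeneousComponent n q := by
  classical
  have hprod : (homogeneousComponent m p * homogeneousComponent n q).IsHomogeneous (m + n) :=
    (homogeneousComponent_isHomogeneous m p).mul (homogeneousComponent_isHomogeneous n q)
  ext d
  rw [coeff_homogeneousComponent]
  split_ifs with hd
  · rw [coeff_mul, coeff_mul]
    refine Finset.sum_congr rfl fun ⟨e, f⟩ hef => ?_
    have hdeg : e.degree + f.degree = m + n := by
      rw [← hd, ← Finset.HasAntidiagonal.mem_antidiagonal.mp hef, map_add]
    rw [coeff_homogeneousComponent, coeff_homogeneousComponent]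
    rcases lt_trichotomy e.degree m with he | he | he
    · rw [coeff_eq_zero_of_totalDegree_lt (f := q) (show q.totalDegree < f.degree by lia)]
      simp
    · simp [he, show f.degree = n by lia]
    · rw [coeff_eq_zero_of_totalDegree_lt (f := p) (show p.totalDegree < e.degree by lia)]
      simp
  · exact (hprod.coeff_eq_zero hd).symm

lemma exists_linear_dvd_of_not_irreducible {σ F : Type*} [Field F] {T : MvPolynomial σ F}
    (hT : T.IsHomogeneous 3) (hT0 : T ≠ 0) (hirr : ¬ Irreducible T) :
    ∃ L : MvPolynomial σ F, L.IsHomogeneous 1 ∧ L ∣ T := by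
  obtain ⟨p, q, hp, hq, rfl⟩ : ∃ p q, ¬ IsUnit p ∧ ¬ IsUnit q ∧ T = p * q := by
    simpa [irreducible_iff, not_isUnit_of_isHomogeneous hT, and_comm, and_assoc] using hirr
  have hp0 : p ≠ 0 := left_ne_zero_of_mul hT0
  have hq0 : q ≠ 0 := right_ne_zero_of_mul hT0
  have hdeg : p.totalDegree + q.totalDegree = 3 := by
    rw [← totalDegree_mul_of_isDomain hp0 hq0, hT.totalDegree hT0]
  have hp1 : p.totalDegree ≠ 0 := mt (isUnit_of_totalDegree_eq_zero hp0) hp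
  have hq1 : q.totalDegree ≠ 0 := mt (isUnit_of_totalDegree_eq_zero hq0) hq
  have hleading : p * q = homogeneousComponent p.totalDegree p *
      homogeneousComponent q.totalDegree q := by
    rw [← homogeneousComponent_add_mul le_rfl le_rfl, hdeg, homogeneousComponent_eq_self hT]
  rw [hleading]
  obtain h | h : p.totalDegree = 1 ∨ q.totalDegree = 1 := by lia
  · exact ⟨_, h ▸ homogeneousComponent_isHomogeneous _ p, dvd_mul_right _ _⟩
  · exact ⟨_, h ▸ homogeneousComponent_isHomogeneous _ q, dvd_mul_left _ _⟩

end ReducibleCubics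

section MapCoeff

variable {σ R A : Type*} [CommSemiring R] [CommSemiring A] [Algebra R A]

/-- The map `MvPolynomial σ A → MvPolynomial σ R` that applies an `R`-linear functional
`φ : A → R` to every coefficient. It is linear over `MvPolynomial σ R` (`mapCoeff_map_mul`), and
so transports polynomial identities from an extension down to the base. -/
noncomputable def mapCoeff (φ : A →ₗ[R] R) : MvPolynomial σ A →+ MvPolynomial σ R where
  toFun p := AddMonoidAlgebra.map φ.toAddMonoidHom p
  map_zero' := by ext; simp
  map_add' p q := by ext; simp

@[simp]
lemma coeff_mapCoeff (φ : A →ₗ[R] R) (p : MvPolynomial σ A) (d : σ →₀ ℕ) :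
    coeff d (mapCoeff φ p) = φ (coeff d p) := rfl

lemma mapCoeff_map_mul (φ : A →ₗ[R] R) (p : MvPolynomial σ R) (q : MvPolynomial σ A) :
    mapCoeff φ (map (algebraMap R A) p * q) = p * mapCoeff φ q := by
  classical
  ext d
  simp [coeff_mul, coeff_map, ← Algebra.smul_def]

lemma mapCoeff_C (φ : A →ₗ[R] R) (a : A) :
    mapCoeff φ (C a : MvPolynomial σ A) = C (φ a) := by
  classical
  ext d
  simp only [coeff_mapCoeff, coeff_C]
  split_ifs <;> simp

lemma mapCoeff_map {φ : A →ₗ[R] R} (hφ : φ 1 = 1) (p : MvPolynomial σ R) :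
    mapCoeff φ (map (algebraMap R A) p) = p := by
  rw [← mul_one (map _ p), mapCoeff_map_mul, ← C_1, mapCoeff_C, hφ, C_1, mul_one]

lemma mapCoeff_sq_of_mapCoeff_eq_zero {φ : A →ₗ[R] R} (hφ : φ 1 = 1) (p q : MvPolynomial σ R)
    {r : MvPolynomial σ A} (hr : mapCoeff φ r = 0) :
    mapCoeff φ ((map (algebraMap R A) p + map (algebraMap R A) q * r) ^ 2) =
      p ^ 2 + q ^ 2 * mapCoeff φ (r ^ 2) := by
  have hexpand : (map (algebraMap R A) p + map (algebraMap R A) q * r) ^ 2 =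
      map (algebraMap R A) (p ^ 2) + map (algebraMap R A) (2 * p * q) * r +
        map (algebraMap R A) (q ^ 2) * r ^ 2 := by
    simp only [map_mul, map_pow, map_ofNat]
    ring
  rw [hexpand, map_add, map_add, mapCoeff_map hφ, mapCoeff_map_mul, mapCoeff_map_mul, hr,
    mul_zero, add_zero]

lemma isHomogeneous_mapCoeff (φ : A →ₗ[R] R) {p : MvPolynomial σ A} {n : ℕ}
    (hp : p.IsHomogeneous n) : (mapCoeff φ p).IsHomogeneous n := by
  refine fun d hd => hp fun hp0 => hd ?_
  rw [coeff_mapCoeff, hp0, map_zero]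

lemma totalDegree_mapCoeff_le (φ : A →ₗ[R] R) (p : MvPolynomial σ A) :
    (mapCoeff φ p).totalDegree ≤ p.totalDegree := by
  refine Finset.sup_mono fun d hd => ?_
  rw [mem_support_iff] at hd ⊢
  exact fun hp0 => hd (by rw [coeff_mapCoeff, hp0, map_zero])

lemma map_mul_sub_map_mapCoeff_of_quadratic_eq_zero {R A : Type*} [CommRing R] [CommRing A]
    [Algebra R A] {φ : A →ₗ[R] R} (hφ : φ 1 = 1) {u v w : MvPolynomial σ R}
    {m : MvPolynomial σ A}
    (hroot : map (algebraMap R A) u * m ^ 2 + map (algebraMap R A) v * m +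
      map (algebraMap R A) w = 0) :
    map (algebraMap R A) v * (m - map (algebraMap R A) (mapCoeff φ m)) =
      map (algebraMap R A) u * (map (algebraMap R A) (mapCoeff φ (m ^ 2)) - m ^ 2) := by
  have hproj : u * mapCoeff φ (m ^ 2) + v * mapCoeff φ m + w = 0 := by
    simpa [mapCoeff_map_mul, mapCoeff_map hφ] using congrArg (mapCoeff φ) hroot
  have hproj' := congrArg (map (algebraMap R A)) hproj
  simp only [map_add, map_mul, map_zero] at hproj'
  linear_combination hroot - hproj'

end MapCoeff

section FieldExtension

variable {σ F K : Type*} [Field F] [Field K] [Algebra F K]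

lemma exists_mapCoeff_ne_zero {p : MvPolynomial σ K} (hp : p ≠ 0) :
    ∃ φ : K →ₗ[F] F, mapCoeff φ p ≠ 0 := by
  obtain ⟨d, hd⟩ := exists_coeff_ne_zero hp
  obtain ⟨φ, hφ⟩ : ∃ φ : Module.Dual F K, φ (coeff d p) ≠ 0 := by
    simpa using mt (Module.forall_dual_apply_eq_zero_iff F (coeff d p)).mp hd
  exact ⟨φ, fun h => hφ (by rw [← coeff_mapCoeff, h, coeff_zero])⟩

lemma exists_linearMap_map_one_eq_one : ∃ φ : K →ₗ[F] F, φ 1 = 1 := by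
  obtain ⟨φ, hφ⟩ := (Algebra.linearMap F K).exists_leftInverse_of_injective
    (LinearMap.ker_eq_bot.mpr (algebraMap F K).injective)
  exact ⟨φ, by simpa using LinearMap.congr_fun hφ 1⟩

lemma map_algebraMap_dvd_map_iff {p q : MvPolynomial σ F} :
    map (algebraMap F K) p ∣ map (algebraMap F K) q ↔ p ∣ q := by
  refine ⟨fun ⟨a, ha⟩ => ?_, map_dvd _⟩
  obtain ⟨φ, hφ⟩ := exists_linearMap_map_one_eq_one (F := F) (K := K)
  exact ⟨mapCoeff φ a, by rw [← mapCoeff_map_mul, ← ha, mapCoeff_map hφ]⟩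

theorem isRelPrime_map_algebraMap {p q : MvPolynomial σ F} (hpq : IsRelPrime p q) :
    IsRelPrime (map (algebraMap F K) p) (map (algebraMap F K) q) := by
  have hinj := map_injective (σ := σ) _ (algebraMap F K).injective
  obtain rfl | hq0 := eq_or_ne q 0
  · rw [map_zero, isRelPrime_zero_right]
    exact (isRelPrime_zero_right.mp hpq).map _
  rintro D ⟨a, ha⟩ ⟨b, hb⟩
  have hDb : D * b ≠ 0 := by rwa [← hb, Ne, map_eq_zero_iff _ hinj]
  have hD0 := left_ne_zero_of_mul hDb
  have hb0 := right_ne_zero_of_mul hDb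
  obtain ⟨φ, hφ⟩ := exists_mapCoeff_ne_zero (F := F) hb0
  have hcross : p * mapCoeff φ b = q * mapCoeff φ a := by
    rw [← mapCoeff_map_mul, ← mapCoeff_map_mul, ha, hb, mul_right_comm]
  have hdvd : q ∣ mapCoeff φ b := hpq.symm.dvd_of_dvd_mul_left ⟨_, hcross⟩
  have hdeg : D.totalDegree + b.totalDegree ≤ b.totalDegree := calc
    D.totalDegree + b.totalDegree = (map (algebraMap F K) q).totalDegree := by
      rw [hb, totalDegree_mul_of_isDomain hD0 hb0]
    _ ≤ q.totalDegree := Finset.sup_mono (support_map_subset _ _)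
    _ ≤ (mapCoeff φ b).totalDegree := totalDegree_le_of_dvd_of_isDomain hdvd hφ
    _ ≤ b.totalDegree := totalDegree_mapCoeff_le φ b
  exact isUnit_of_totalDegree_eq_zero hD0 (by lia)

lemma map_dvd_map_mul_of_quadratic_eq_zero {φ : K →ₗ[F] F} (hφ : φ 1 = 1)
    {u v w m₀ : MvPolynomial σ F} {α : MvPolynomial σ K} (hα : mapCoeff φ α = 0) (hu0 : u ≠ 0)
    (hroot : map (algebraMap F K) u * (map (algebraMap F K) m₀ + map (algebraMap F K) u * α) ^ 2 +
      map (algebraMap F K) v * (map (algebraMap F K) m₀ + map (algebraMap F K) u * α) +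
      map (algebraMap F K) w = 0) :
    map (algebraMap F K) u ∣ map (algebraMap F K) v * α := by
  have hu0' : map (algebraMap F K) u ≠ 0 :=
    (map_ne_zero_iff _ (map_injective _ (algebraMap F K).injective)).mpr hu0
  have hdiff := map_mul_sub_map_mapCoeff_of_quadratic_eq_zero hφ hroot
  rw [mapCoeff_sq_of_mapCoeff_eq_zero hφ m₀ u hα, map_add, mapCoeff_map hφ, mapCoeff_map_mul, hα,
    mul_zero, add_zero] at hdiff
  simp only [map_add, map_mul, map_pow] at hdiff
  refine ⟨map (algebraMap F K) u * map (algebraMap F K) (mapCoeff φ (α ^ 2)) -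
    2 * map (algebraMap F K) m₀ * α - map (algebraMap F K) u * α ^ 2, mul_left_cancel₀ hu0' ?_⟩
  linear_combination hdiff

/-- Modulo `u` the root `m` is `-w / v`, hence rational; expanding the quadratic equation around a
rational approximation `m₀` of `m` modulo `u` then shows `m = m₀` modulo `u ^ 2`, which for
reasons of degree is an equality. -/
theorem exists_map_eq_of_quadratic_eq_zero {u v w : MvPolynomial σ F} {m : MvPolynomial σ K}
    (hu : u.IsHomogeneous 1) (hm : m.IsHomogeneous 1)
    (hroot : map (algebraMap F K) u * m ^ 2 + map (algebraMap F K) v * m +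
      map (algebraMap F K) w = 0)
    (huv : ¬ u ∣ v) :
    ∃ m₀ : MvPolynomial σ F, m₀.IsHomogeneous 1 ∧ map (algebraMap F K) m₀ = m := by
  obtain ⟨φ, hφ⟩ := exists_linearMap_map_one_eq_one (F := F) (K := K)
  set ι := map (σ := σ) (algebraMap F K)
  set m₀ := mapCoeff φ m with hm₀
  have hm₀1 : m₀.IsHomogeneous 1 := isHomogeneous_mapCoeff φ hm
  refine ⟨m₀, hm₀1, ?_⟩
  have huv' : ¬ ι u ∣ ι v := mt map_algebraMap_dvd_map_iff.mp huv
  have hdiff : ι v * (m - ι m₀) = ι u * (ι (mapCoeff φ (m ^ 2)) - m ^ 2) :=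
    map_mul_sub_map_mapCoeff_of_quadratic_eq_zero hφ hroot
  by_contra hne
  have hm0 : m - ι m₀ ≠ 0 := sub_ne_zero.mpr (Ne.symm hne)
  have hu0 : ι u ≠ 0 := fun h => (mul_ne_zero (fun hv : ι v = 0 => huv' (hv ▸ dvd_zero _)) hm0)
    (by rw [hdiff, h, zero_mul])
  have hu1 : (ι u).IsHomogeneous 1 := hu.map _
  have hprime : Prime (ι u) := (irreducible_of_isHomogeneous_one hu1 hu0).prime
  obtain ⟨α, hα⟩ : ι u ∣ m - ι m₀ := (hprime.dvd_or_dvd ⟨_, hdiff⟩).resolve_left huv'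
  have hα0 : α ≠ 0 := right_ne_zero_of_mul (hα ▸ hm0)
  have hαdeg : α.totalDegree = 0 := by
    have h := (hm.sub (hm₀1.map _)).totalDegree hm0
    rw [hα, totalDegree_mul_of_isDomain hu0 hα0, hu1.totalDegree hu0] at h
    lia
  have hαproj : mapCoeff φ α = 0 := by
    have h := congrArg (mapCoeff φ) hα
    rw [map_sub, mapCoeff_map hφ, mapCoeff_map_mul, ← hm₀, sub_self] at h
    exact (mul_eq_zero.mp h.symm).resolve_left fun h => hu0 (by rw [h, map_zero])
  have hdvd : ι u ∣ ι v * α := by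
    rw [show m = ι m₀ + ι u * α by rw [← hα, add_sub_cancel]] at hroot
    exact map_dvd_map_mul_of_quadratic_eq_zero hφ hαproj (fun h => hu0 (by rw [h, map_zero])) hroot
  have hle := totalDegree_le_of_dvd_of_isDomain ((hprime.dvd_or_dvd hdvd).resolve_left huv') hα0
  rw [hu1.totalDegree hu0, hαdeg] at hle
  lia

end FieldExtension

section HeadQuadratic

variable {n : ℕ} {R : Type*} [CommRing R]

/-- The polynomial `X₀² u + X₀ v + w`, where `u`, `v`, `w` do not involve `X₀` (they are given as
polynomials in the remaining variables). -/
noncomputable def headQuadratic (u v w : MvPolynomial (Fin n) R) : MvPolynomial (Fin (n + 1)) R :=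
  X 0 ^ 2 * rename Fin.succ u + X 0 * rename Fin.succ v + rename Fin.succ w

variable {u v w : MvPolynomial (Fin n) R}

lemma map_headQuadratic {R' : Type*} [CommRing R'] (f : R →+* R') :
    map f (headQuadratic u v w) = headQuadratic (map f u) (map f v) (map f w) := by
  simp [headQuadratic, map_rename]

lemma isHomogeneous_headQuadratic (hu : u.IsHomogeneous 1) (hv : v.IsHomogeneous 2)
    (hw : w.IsHomogeneous 3) : (headQuadratic u v w).IsHomogeneous 3 :=
  (((isHomogeneous_X_pow 0 2).mul hu.rename_isHomogeneous).add
    ((isHomogeneous_X R 0).mul hv.rename_isHomogeneous)).add hw.rename_isHomogeneous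

lemma finSuccEquiv_rename_succ (p : MvPolynomial (Fin n) R) :
    finSuccEquiv R n (rename Fin.succ p) = Polynomial.C p := by
  induction p using MvPolynomial.induction_on with
  | C a => simp [finSuccEquiv_apply]
  | add p q hp hq => simp [hp, hq]
  | mul_X p i hp => simp [hp, finSuccEquiv_X_succ]

lemma finSuccEquiv_headQuadratic :
    finSuccEquiv R n (headQuadratic u v w) =
      Polynomial.C u * Polynomial.X ^ 2 + Polynomial.C v * Polynomial.X + Polynomial.C w := by
  simp only [headQuadratic, map_add, map_mul, map_pow, finSuccEquiv_X_zero,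
    finSuccEquiv_rename_succ]
  ring

lemma rename_dvd_headQuadratic_iff {l : MvPolynomial (Fin n) R} :
    rename Fin.succ l ∣ headQuadratic u v w ↔ l ∣ u ∧ l ∣ v ∧ l ∣ w := by
  rw [← map_dvd_iff (finSuccEquiv R n), finSuccEquiv_headQuadratic, finSuccEquiv_rename_succ]
  refine ⟨fun h => ?_, fun ⟨hu, hv, hw⟩ => ?_⟩
  · rw [Polynomial.C_dvd_iff_dvd_coeff] at h
    exact ⟨by simpa using h 2, by simpa using h 1, by simpa using h 0⟩
  · exact dvd_add (dvd_add ((map_dvd _ hu).mul_right _) ((map_dvd _ hv).mul_right _))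
      (map_dvd _ hw)

lemma X_zero_sub_rename_dvd_headQuadratic_iff {m : MvPolynomial (Fin n) R} :
    X 0 - rename Fin.succ m ∣ headQuadratic u v w ↔ u * m ^ 2 + v * m + w = 0 := by
  rw [← map_dvd_iff (finSuccEquiv R n), finSuccEquiv_headQuadratic, map_sub,
    finSuccEquiv_rename_succ, finSuccEquiv_X_zero, Polynomial.dvd_iff_isRoot, Polynomial.IsRoot]
  simp

lemma headQuadratic_ne_zero (hv : v ≠ 0) : headQuadratic u v w ≠ 0 := by
  intro h
  have hdvd : rename Fin.succ (0 : MvPolynomial (Fin n) R) ∣ headQuadratic u v w :=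
    h ▸ dvd_zero _
  exact hv (zero_dvd_iff.mp (rename_dvd_headQuadratic_iff.mp hdvd).2.1)

end HeadQuadratic

section LinearFactorDescent

variable {n : ℕ} {F K : Type*} [Field F] [Field K] [Algebra F K]

lemma not_dvd_map_of_totalDegree_lt {σ : Type*} {S P : MvPolynomial σ F} {D : MvPolynomial σ K}
    (hS : Irreducible S) (hP : P ≠ 0) (hdeg : P.totalDegree < S.totalDegree) (hD : ¬ IsUnit D)
    (hDS : D ∣ map (algebraMap F K) S) : ¬ D ∣ map (algebraMap F K) P := by
  have hSP : IsRelPrime S P := hS.isRelPrime_iff_not_dvd.mpr fun hdvd =>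
    hdeg.not_ge (totalDegree_le_of_dvd_of_isDomain hdvd hP)
  exact fun hDP => hD (isRelPrime_map_algebraMap hSP hDS hDP)

lemma exists_linear_dvd_of_X_zero_sub_rename_dvd_map {u v w : MvPolynomial (Fin n) F}
    (hu : u.IsHomogeneous 1) {m : MvPolynomial (Fin n) K} (hm : m.IsHomogeneous 1)
    (hdvd : X 0 - rename Fin.succ m ∣ map (algebraMap F K) (headQuadratic u v w)) :
    ∃ L : MvPolynomial (Fin (n + 1)) F, L.IsHomogeneous 1 ∧ L ∣ headQuadratic u v w := by
  rw [map_headQuadratic, X_zero_sub_rename_dvd_headQuadratic_iff] at hdvd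
  by_cases huv : u ∣ v
  · have huw : u ∣ w := by
      rw [← map_algebraMap_dvd_map_iff (K := K)] at huv ⊢
      exact (dvd_add_right ((dvd_mul_right _ _).add (huv.mul_right _))).mp (hdvd ▸ dvd_zero _)
    exact ⟨rename Fin.succ u, hu.rename_isHomogeneous,
      rename_dvd_headQuadratic_iff.mpr ⟨dvd_rfl, huv, huw⟩⟩
  · obtain ⟨m₀, hm₀, rfl⟩ := exists_map_eq_of_quadratic_eq_zero hu hm hdvd huv
    refine ⟨X 0 - rename Fin.succ m₀, (isHomogeneous_X F 0).sub hm₀.rename_isHomogeneous, ?_⟩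
    rw [X_zero_sub_rename_dvd_headQuadratic_iff]
    exact map_injective _ (algebraMap F K).injective (by simpa using hdvd)

theorem exists_linear_dvd_of_not_irreducible_map {u v w : MvPolynomial (Fin n) F}
    (hu : u.IsHomogeneous 1) (hv : v.IsHomogeneous 2) (hw : w.IsHomogeneous 3) (hv0 : v ≠ 0)
    (hred : ¬ Irreducible (map (algebraMap F K) (headQuadratic u v w))) :
    ∃ L : MvPolynomial (Fin (n + 1)) F, L.IsHomogeneous 1 ∧ L ∣ headQuadratic u v w := by
  have hS := isHomogeneous_headQuadratic hu hv hw
  have hS0 : headQuadratic u v w ≠ 0 := headQuadratic_ne_zero hv0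
  by_cases hirr : Irreducible (headQuadratic u v w)
  swap
  · exact exists_linear_dvd_of_not_irreducible hS hS0 hirr
  have hmap0 : map (algebraMap F K) (headQuadratic u v w) ≠ 0 :=
    (map_ne_zero_iff _ (map_injective _ (algebraMap F K).injective)).mpr hS0
  obtain ⟨L, hL, hLS⟩ :=
    exists_linear_dvd_of_not_irreducible (hS.map (algebraMap F K)) hmap0 hred
  obtain ⟨l, rfl⟩ | ⟨m, hm, hLm⟩ := eq_rename_or_associated_X_zero_sub_rename hL
  · have hlv : rename Fin.succ l ∣ map (algebraMap F K) (rename Fin.succ v) := by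
      rw [map_headQuadratic, rename_dvd_headQuadratic_iff] at hLS
      rw [map_rename]
      exact map_dvd _ hLS.2.1
    have hv0' : rename Fin.succ v ≠ 0 :=
      (map_ne_zero_iff _ (rename_injective _ (Fin.succ_injective n))).mpr hv0
    have hdeg : (rename Fin.succ v).totalDegree < (headQuadratic u v w).totalDegree := by
      rw [hS.totalDegree hS0, hv.rename_isHomogeneous.totalDegree hv0']
      norm_num
    have hLunit : ¬ IsUnit (rename Fin.succ l) := not_isUnit_of_isHomogeneous hL one_ne_zero
    exact absurd hlv (not_dvd_map_of_totalDegree_lt hirr hv0' hdeg hLunit hLS)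
  · exact exists_linear_dvd_of_X_zero_sub_rename_dvd_map hu hm (hLm.dvd_iff_dvd_left.mp hLS)

end LinearFactorDescent

theorem slice_S_has_zero_general {F K : Type*} [Field F] [Field K] [Algebra F K]
    (u v w : MvPolynomial (Fin 2) F)
    (hu : u.IsHomogeneous 1) (hv : v.IsHomogeneous 2) (hw : w.IsHomogeneous 3)
    (hv0 : MvPolynomial.aeval ![Polynomial.X, 0] v ≠ (0 : Polynomial F))
    (S : MvPolynomial (Fin 3) F)
    (hS : S = X 0 ^ 2 * rename Fin.succ u + X 0 * rename Fin.succ v + rename Fin.succ w)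
    (hirr : ¬ Irreducible (MvPolynomial.map (algebraMap F K) S)) :
    (∃ L : MvPolynomial (Fin 3) F, L.IsHomogeneous 1 ∧ L ∣ S ∧ ∀ c : F, L ≠ C c * X 2) ∧
    ∃ x : Fin 3 → F, eval x S = 0 ∧ x 2 ≠ 0 := by
  replace hS : S = headQuadratic u v w := hS
  subst hS
  have hvne : v ≠ 0 := fun h => hv0 (by rw [h, map_zero])
  obtain ⟨L, hL, hLS⟩ := exists_linear_dvd_of_not_irreducible_map hu hv hw hvne hirr
  have hXS : ¬ rename Fin.succ (X 1) ∣ headQuadratic u v w := by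
    rw [rename_dvd_headQuadratic_iff]
    rintro ⟨-, ⟨v', rfl⟩, -⟩
    exact hv0 (by simp)
  have hLX (c : F) : L ≠ C c * X 2 := by
    rintro rfl
    exact hXS (by simpa using dvd_of_mul_left_dvd hLS)
  obtain ⟨x, hxL, hx2⟩ := exists_eval_eq_zero_of_ne_C_mul_X hL 2 hLX
  exact ⟨⟨L, hL, hLS, hLX⟩, x, zero_dvd_iff.mp (hxL ▸ map_dvd (eval x) hLS), hx2⟩

/-- If the cubic form `S(X,Y,Z) = X²u(Y,Z) + Xv(Y,Z) + w(Y,Z)` with `v(Y,0) ≢ 0`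
and `w(0,Z) ≢ 0` is not absolutely irreducible, then it has a linear factor over
`𝔽_q` which is not a scalar multiple of `Z`, and hence a zero with `Z ≠ 0`. -/
theorem slice_S_has_zero {F : Type*} [Field F] [Fintype F]
    (u v w : MvPolynomial (Fin 2) F)
    (hu : u.IsHomogeneous 1) (hv : v.IsHomogeneous 2) (hw : w.IsHomogeneous 3)
    (hv0 : MvPolynomial.aeval ![Polynomial.X, 0] v ≠ (0 : Polynomial F))
    (hw0 : MvPolynomial.aeval ![0, Polynomial.X] w ≠ (0 : Polynomial F))
    (S : MvPolynomial (Fin 3) F)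
    (hS : S = X 0 ^ 2 * rename Fin.succ u + X 0 * rename Fin.succ v + rename Fin.succ w)
    (hirr : ¬ Irreducible (MvPolynomial.map (algebraMap F (AlgebraicClosure F)) S)) :
    (∃ L : MvPolynomial (Fin 3) F, L.IsHomogeneous 1 ∧ L ∣ S ∧ ∀ c : F, L ≠ C c * X 2) ∧
    ∃ x : Fin 3 → F, eval x S = 0 ∧ x 2 ≠ 0 :=
  slice_S_has_zero_general u v w hu hv hw hv0 S hS hirr
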